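/- Let n, r be positive integers, D a symmetric n×n real matrix, Φ an n×r real matrix with ΦᵀΦ = I_r, and g : ℝ → ℝ differentiable. Suppose q̂, p̂ : ℝ → ℝʳ are differentiable and satisfy for all t the projected ROM equations q̂′(t) = p̂(t) and p̂′(t) = (ΦᵀDΦ) q̂(t) − Φᵀ f(Φq̂(t)), where f : ℝⁿ → ℝⁿ is defined componentwise by f(x)ᵢ = g′(xᵢ). Then the reduced Hamiltonian t ↦ ½ p̂(t)ᵀp̂(t) − ½ q̂(t)ᵀ(ΦᵀDΦ) q̂(t) + Σᵢ₌₁ⁿ g((Φq̂(t))ᵢ) is constant in t. -/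

import Mathlib

open Matrix BigOperators

/-! The time derivative of the reduced Hamiltonian along a solution vanishes. With `A = ΦᵀDΦ` and
`v = f(Φq̂)`, the product rule and the symmetry of `A` give
`p̂ ⬝ᵥ (A q̂ - Φᵀ v) - p̂ ⬝ᵥ A q̂` for the quadratic part, and the chain rule gives
`v ⬝ᵥ Φ p̂ = p̂ ⬝ᵥ Φᵀ v` for the potential part; the sum is zero. A function on `ℝ` with zero
derivative is constant. -/

lemma hasDerivAt_dotProduct {m : ℕ} {u v : ℝ → Fin m → ℝ} {u' v' : Fin m → ℝ} {t : ℝ}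
    (hu : HasDerivAt u u' t) (hv : HasDerivAt v v' t) :
    HasDerivAt (fun t => u t ⬝ᵥ v t) (u' ⬝ᵥ v t + u t ⬝ᵥ v') t := by
  simp only [dotProduct, ← Finset.sum_add_distrib]
  exact HasDerivAt.fun_sum fun i _ => (hasDerivAt_pi.1 hu i).mul (hasDerivAt_pi.1 hv i)

lemma hasDerivAt_mulVec {k m : ℕ} (M : Matrix (Fin k) (Fin m) ℝ) {u : ℝ → Fin m → ℝ}
    {u' : Fin m → ℝ} {t : ℝ} (hu : HasDerivAt u u' t) :
    HasDerivAt (fun t => M.mulVec (u t)) (M.mulVec u') t := by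
  refine hasDerivAt_pi.2 fun i => ?_
  simp only [mulVec, dotProduct]
  exact HasDerivAt.fun_sum fun j _ => (hasDerivAt_pi.1 hu j).const_mul (M i j)

/-- The symplectic (cotangent-lift PSD) reduced-order model of the conservative FOM
conserves the reduced Hamiltonian. -/
theorem symplectic_rom_conserves_reduced_hamiltonian
    (n r : ℕ) (hn : 0 < n) (hr : 0 < r)
    (D : Matrix (Fin n) (Fin n) ℝ) (hD : D.IsSymm)
    (Φ : Matrix (Fin n) (Fin r) ℝ) (hΦ : Φᵀ * Φ = 1)
    (g : ℝ → ℝ) (hg : Differentiable ℝ g)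
    (qh ph : ℝ → Fin r → ℝ)
    (hq : ∀ t, HasDerivAt qh (ph t) t)
    (hp : ∀ t, HasDerivAt ph
      ((Φᵀ * D * Φ).mulVec (qh t)
        - Φᵀ.mulVec (fun i => deriv g (Φ.mulVec (qh t) i))) t) :
    ∀ s t : ℝ,
      (1 / 2) * (ph s ⬝ᵥ ph s) - (1 / 2) * (qh s ⬝ᵥ (Φᵀ * D * Φ).mulVec (qh s))
        + ∑ i, g (Φ.mulVec (qh s) i)
      = (1 / 2) * (ph t ⬝ᵥ ph t) - (1 / 2) * (qh t ⬝ᵥ (Φᵀ * D * Φ).mulVec (qh t))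
        + ∑ i, g (Φ.mulVec (qh t) i) := by
  set A := Φᵀ * D * Φ with hA
  have hAsymm : Aᵀ = A := by
    rw [hA, transpose_mul, transpose_mul, transpose_transpose, hD.eq, Matrix.mul_assoc]
  have hderiv : ∀ t, HasDerivAt (fun t => (1 / 2) * (ph t ⬝ᵥ ph t)
      - (1 / 2) * (qh t ⬝ᵥ A.mulVec (qh t)) + ∑ i, g (Φ.mulVec (qh t) i)) 0 t := by
    intro t
    have hkin := (hasDerivAt_dotProduct (hp t) (hp t)).const_mul (1 / 2 : ℝ)
    have hquad := (hasDerivAt_dotProduct (hq t) (hasDerivAt_mulVec A (hq t))).const_mul (1 / 2 : ℝ)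
    have hpot : HasDerivAt (fun t => ∑ i, g (Φ.mulVec (qh t) i))
        (∑ i, deriv g (Φ.mulVec (qh t) i) * Φ.mulVec (ph t) i) t :=
      HasDerivAt.fun_sum fun i _ => (hg _).hasDerivAt.comp t
        (hasDerivAt_pi.1 (hasDerivAt_mulVec Φ (hq t)) i)
    refine ((hkin.sub hquad).add hpot).congr_deriv ?_
    set v : Fin n → ℝ := fun i => deriv g (Φ.mulVec (qh t) i)
    have hsum : ∑ i, deriv g (Φ.mulVec (qh t) i) * Φ.mulVec (ph t) i
        = ph t ⬝ᵥ Φᵀ.mulVec v := by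
      rw [mulVec_transpose, dotProduct_comm, ← dotProduct_mulVec]
      rfl
    have hswap : qh t ⬝ᵥ A.mulVec (ph t) = ph t ⬝ᵥ A.mulVec (qh t) := by
      rw [dotProduct_mulVec, ← mulVec_transpose, hAsymm, dotProduct_comm]
    rw [hsum, hswap, dotProduct_comm _ (ph t), dotProduct_sub]
    ring
  exact is_const_of_deriv_eq_zero (fun t => (hderiv t).differentiableAt)
    fun t => (hderiv t).deriv
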